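/- arXiv:2005.00793 — 3 statements merged into one kernel-verified Lean document; each statement's English description precedes it below -/
import Mathlib

section
/- There is a constant C > 0 such that for every x ∈ ℝ^N and every r > 0, C^{−1} · r^N · ∏_{α∈R}(|⟨x,α⟩| + r)^{k(α)} ≤ w(B(x,r)) ≤ C · r^N · ∏_{α∈R}(|⟨x,α⟩| + r)^{k(α)}. -/
open MeasureTheory Metric
open scoped ENNReal RealInnerProductSpace BigOperators

noncomputable section

/-- The reflection `σ_α` in the hyperplane orthogonal to `α`. -/
def dunklReflect {N : ℕ} (α x : EuclideanSpace ℝ (Fin N)) : EuclideanSpace ℝ (Fin N) :=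
  x - (2 * ⟪x, α⟫ / ‖α‖ ^ 2) • α

/-- The Dunkl weight measure `dw` with density `∏_{α ∈ R} |⟨x,α⟩|^{k α}`. -/
def dunklMeasure (N : ℕ) (R : Finset (EuclideanSpace ℝ (Fin N)))
    (k : EuclideanSpace ℝ (Fin N) → ℝ) : Measure (EuclideanSpace ℝ (Fin N)) :=
  (volume : Measure (EuclideanSpace ℝ (Fin N))).withDensity fun x =>
    ENNReal.ofReal (∏ α ∈ R, |⟪x, α⟫| ^ (k α))

/-- The homogeneous dimension `𝐍 = N + Σ_{α ∈ R} k(α)`. -/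
def homDim (N : ℕ) (R : Finset (EuclideanSpace ℝ (Fin N)))
    (k : EuclideanSpace ℝ (Fin N) → ℝ) : ℝ :=
  N + ∑ α ∈ R, k α

/-!
The weight is a product of powers of the linear forms `ℓ α = ⟪·, α⟫`. On a ball `ball x r` each
`|ℓ α|` is at most a constant times `|ℓ α x| + r`, which gives the upper bound. For the lower bound
it suffices to find inside `ball x r` a ball of radius comparable to `r` on which each `|ℓ α|` is at
least a constant times `|ℓ α x| + r`. A proper closed subspace `F` is porous: if `w` has distance at
least `2 * ρ` to `F`, then `ball x ρ` and `ball (x + w) ρ` cannot both meet `F`. Porosity passes to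
finite unions by shrinking the ball once for each set, so some ball of radius comparable to `r`
misses all the hyperplanes `ℓ α = 0`, and on its concentric half each `|ℓ α|` is bounded below by a
multiple of `r`, hence also of `|ℓ α x| + r`.
-/

section UniformlyPorous

/-- A set is uniformly porous if every ball contains a ball of comparable radius that misses the
set. The ratio `δ` of the radii is the same at all locations and at all scales, large ones
included. -/
def UniformlyPorous {X : Type*} [PseudoMetricSpace X] (A : Set X) : Prop :=
  ∃ δ : ℝ, 0 < δ ∧ ∀ (x : X) (r : ℝ), 0 < r → ∃ y, ball y (δ * r) ⊆ ball x r \ A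

namespace UniformlyPorous

variable {X : Type*} [PseudoMetricSpace X]

theorem empty : UniformlyPorous (∅ : Set X) :=
  ⟨1, one_pos, fun x r _ => ⟨x, by rw [one_mul, Set.sdiff_empty]⟩⟩

theorem union {A B : Set X} (hA : UniformlyPorous A) (hB : UniformlyPorous B) :
    UniformlyPorous (A ∪ B) := by
  obtain ⟨δ, hδ, hA⟩ := hA
  obtain ⟨ε, hε, hB⟩ := hB
  refine ⟨ε * δ, by positivity, fun x r hr => ?_⟩
  obtain ⟨y, hy⟩ := hA x r hr
  obtain ⟨z, hz⟩ := hB y (δ * r) (by positivity)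
  refine ⟨z, ?_⟩
  rw [mul_assoc, ← Set.sdiff_sdiff]
  exact hz.trans (Set.sdiff_subset_sdiff_left hy)

theorem biUnion_finset {ι : Type*} {s : Finset ι} {A : ι → Set X}
    (hA : ∀ i ∈ s, UniformlyPorous (A i)) : UniformlyPorous (⋃ i ∈ s, A i) := by
  classical
  induction s using Finset.induction_on with
  | empty => simpa using empty
  | insert i s _ ih =>
    rw [Finset.set_biUnion_insert]
    exact (hA i (Finset.mem_insert_self i s)).union
      (ih fun j hj => hA j (Finset.mem_insert_of_mem hj))

end UniformlyPorous

theorem uniformlyPorous_submodule {E : Type*} [NormedAddCommGroup E] [NormedSpace ℝ E]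
    {F : Submodule ℝ E} (hFc : IsClosed (F : Set E)) (hF : F ≠ ⊤) :
    UniformlyPorous (F : Set E) := by
  obtain ⟨v, -, hv, hvF⟩ :=
    riesz_lemma_of_lt_one hFc (SetLike.exists_not_mem_of_ne_top F hF) one_half_lt_one
  refine ⟨1 / 8, by norm_num, fun x r hr => ?_⟩
  set w := (r / 2) • v
  have hw : ‖w‖ = r / 2 := by
    rw [norm_smul, hv, mul_one, Real.norm_of_nonneg (by positivity)]
  have hwF : ∀ f ∈ F, r / 4 ≤ ‖w - f‖ := fun f hf => by
    have hscale : w - f = (r / 2) • (v - (r / 2)⁻¹ • f) := by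
      rw [smul_sub, smul_inv_smul₀ (by positivity)]
    rw [hscale, norm_smul, Real.norm_of_nonneg (by positivity)]
    nlinarith [hvF _ (F.smul_mem (r / 2)⁻¹ hf)]
  by_cases hx : Disjoint (ball x (1 / 8 * r)) (F : Set E)
  · exact ⟨x, Set.subset_sdiff.2 ⟨ball_subset_ball (by linarith), hx⟩⟩
  refine ⟨x + w, Set.subset_sdiff.2 ⟨ball_subset_ball' ?_, Set.disjoint_left.2 fun b hb hbF => ?_⟩⟩
  · rw [dist_self_add_left, hw]
    linarith
  obtain ⟨a, ha, haF⟩ := Set.not_disjoint_iff.1 hx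
  have hdist : ‖w - (b - a)‖ ≤ ‖a - x‖ + ‖b - (x + w)‖ := by
    rw [show w - (b - a) = (a - x) - (b - (x + w)) by abel]
    exact norm_sub_le _ _
  rw [mem_ball_iff_norm] at ha hb
  linarith [hwF _ (F.sub_mem hbF haF)]

end UniformlyPorous

section LinearForms

variable {E : Type*} [NormedAddCommGroup E] [NormedSpace ℝ E]

theorem uniformlyPorous_ker {ℓ : StrongDual ℝ E} (hℓ : ℓ ≠ 0) :
    UniformlyPorous (ℓ.ker : Set E) := by
  refine uniformlyPorous_submodule ℓ.isClosed_ker fun hker => hℓ ?_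
  exact ContinuousLinearMap.coe_injective (LinearMap.ker_eq_top.1 hker)

theorem opNorm_mul_le_abs_apply {ℓ : StrongDual ℝ E} {z : E} {ρ : ℝ} (hρ : 0 < ρ)
    (hz : Disjoint (ball z ρ) (ℓ.ker : Set E)) : ‖ℓ‖ * ρ ≤ |ℓ z| := by
  rw [← le_div_iff₀ hρ]
  refine ℓ.opNorm_le_bound (by positivity) fun v => ?_
  rcases eq_or_ne (ℓ v) 0 with hv | hv
  · rw [hv, norm_zero]
    positivity
  have hker : z - (ℓ z / ℓ v) • v ∈ ℓ.ker := by
    simp [hv]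
  have hdist : ρ ≤ |ℓ z| / |ℓ v| * ‖v‖ := by
    simpa [norm_smul] using Set.disjoint_right.1 hz hker
  rw [Real.norm_eq_abs, div_mul_eq_mul_div, le_div_iff₀ hρ, mul_comm, ← le_div_iff₀ (abs_pos.2 hv)]
  rwa [mul_div_right_comm]

theorem abs_apply_le_add_of_dist_le (ℓ : StrongDual ℝ E) {x z : E} {r : ℝ} (h : dist z x ≤ r) :
    |ℓ z| ≤ |ℓ x| + ‖ℓ‖ * r := by
  have hsub : |ℓ z - ℓ x| ≤ ‖ℓ‖ * r := by
    rw [← map_sub, ← Real.norm_eq_abs]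
    exact ℓ.le_opNorm_of_le (by rwa [← dist_eq_norm])
  linarith [abs_sub_abs_le_abs_sub (ℓ z) (ℓ x)]

variable {ι : Type*} {s : Finset ι} {ℓ : ι → StrongDual ℝ E}

theorem exists_ball_subset_forall_le_abs_apply (hℓ : ∀ i ∈ s, ℓ i ≠ 0) :
    ∃ δ : ℝ, 0 < δ ∧ ∀ (x : E) (r : ℝ), 0 < r → ∃ y, ball y (δ * r) ⊆ ball x r ∧
      ∀ z ∈ ball y (δ * r), ∀ i ∈ s, ‖ℓ i‖ * (δ * r) ≤ |ℓ i z| := by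
  obtain ⟨δ, hδ, H⟩ := UniformlyPorous.biUnion_finset fun i hi => uniformlyPorous_ker (hℓ i hi)
  refine ⟨δ / 2, by positivity, fun x r hr => ?_⟩
  obtain ⟨y, hy⟩ := H x r hr
  obtain ⟨hyx, hyker⟩ := Set.subset_sdiff.1 hy
  have hpos : 0 < δ * r := by positivity
  refine ⟨y, (ball_subset_ball (by linarith)).trans hyx, fun z hz i hi => ?_⟩
  have hzy : ball z (δ / 2 * r) ⊆ ball y (δ * r) :=
    ball_subset_ball' (by linarith [mem_ball.1 hz])
  exact opNorm_mul_le_abs_apply (by positivity)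
    ((Set.disjoint_iUnion₂_right.1 hyker i hi).mono_left hzy)

end LinearForms

section Weight

theorem prod_rpow_le {ι : Type*} {s : Finset ι} {k K f g : ι → ℝ}
    (hk : ∀ i ∈ s, 0 ≤ k i) (hK : ∀ i ∈ s, 0 ≤ K i) (hf : ∀ i ∈ s, 0 ≤ f i)
    (hg : ∀ i ∈ s, 0 ≤ g i) (hfg : ∀ i ∈ s, f i ≤ K i * g i) :
    ∏ i ∈ s, f i ^ k i ≤ (∏ i ∈ s, K i ^ k i) * ∏ i ∈ s, g i ^ k i := by
  rw [← Finset.prod_mul_distrib]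
  refine Finset.prod_le_prod (fun i hi => Real.rpow_nonneg (hf i hi) _) fun i hi => ?_
  rw [← Real.mul_rpow (hK i hi) (hg i hi)]
  exact Real.rpow_le_rpow (hf i hi) (hfg i hi) (hk i hi)

variable {E : Type*} [NormedAddCommGroup E] [NormedSpace ℝ E] {ι : Type*} {s : Finset ι}
  {ℓ : ι → StrongDual ℝ E} {k : ι → ℝ}

theorem prod_abs_apply_rpow_le (hk : ∀ i ∈ s, 0 ≤ k i) {x z : E} {r : ℝ} (hz : z ∈ ball x r) :
    ∏ i ∈ s, |ℓ i z| ^ k i ≤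
      (∏ i ∈ s, (1 + ‖ℓ i‖) ^ k i) * ∏ i ∈ s, (|ℓ i x| + r) ^ k i := by
  have hr : 0 < r := pos_of_mem_ball hz
  refine prod_rpow_le hk (fun i _ => by positivity) (fun i _ => abs_nonneg _)
    (fun i _ => by positivity) fun i _ => ?_
  calc |ℓ i z| ≤ |ℓ i x| + ‖ℓ i‖ * r := abs_apply_le_add_of_dist_le (ℓ i) (mem_ball.1 hz).le
    _ ≤ (1 + ‖ℓ i‖) * (|ℓ i x| + r) := by nlinarith [abs_nonneg (ℓ i x), norm_nonneg (ℓ i)]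

theorem prod_abs_apply_add_rpow_le (hk : ∀ i ∈ s, 0 ≤ k i) (hℓ : ∀ i ∈ s, ℓ i ≠ 0) {x z : E}
    {r δ : ℝ} (hδ : 0 < δ) (hz : z ∈ ball x r) (hzℓ : ∀ i ∈ s, ‖ℓ i‖ * (δ * r) ≤ |ℓ i z|) :
    ∏ i ∈ s, (|ℓ i x| + r) ^ k i ≤
      (∏ i ∈ s, (1 + (‖ℓ i‖ + 1) / (‖ℓ i‖ * δ)) ^ k i) * ∏ i ∈ s, |ℓ i z| ^ k i := by
  have hr : 0 < r := pos_of_mem_ball hz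
  refine prod_rpow_le hk (fun i _ => by positivity) (fun i _ => by positivity)
    (fun i _ => abs_nonneg _) fun i hi => ?_
  have hnorm : 0 < ‖ℓ i‖ := norm_pos_iff.2 (hℓ i hi)
  have hrz : r ≤ |ℓ i z| / (‖ℓ i‖ * δ) := by
    rw [le_div_iff₀ (by positivity)]
    linarith [hzℓ i hi]
  calc |ℓ i x| + r ≤ |ℓ i z| + ‖ℓ i‖ * r + r := by
        gcongr
        exact abs_apply_le_add_of_dist_le (ℓ i) (mem_ball'.1 hz).le
    _ = |ℓ i z| + (‖ℓ i‖ + 1) * r := by ring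
    _ ≤ |ℓ i z| + (‖ℓ i‖ + 1) * (|ℓ i z| / (‖ℓ i‖ * δ)) := by gcongr
    _ = (1 + (‖ℓ i‖ + 1) / (‖ℓ i‖ * δ)) * |ℓ i z| := by ring

end Weight

section Measure

theorem withDensity_apply_le_mul {X : Type*} [MeasurableSpace X] (μ : Measure X) {f : X → ℝ≥0∞}
    {t : Set X} {c : ℝ≥0∞} (ht : MeasurableSet t) (hf : ∀ z ∈ t, f z ≤ c) :
    μ.withDensity f t ≤ c * μ t := by
  rw [withDensity_apply _ ht, ← setLIntegral_const]
  exact setLIntegral_mono' ht hf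

theorem mul_le_withDensity_apply {X : Type*} [MeasurableSpace X] (μ : Measure X) {f : X → ℝ≥0∞}
    {t : Set X} {c : ℝ≥0∞} (ht : MeasurableSet t) (hf : ∀ z ∈ t, c ≤ f z) :
    c * μ t ≤ μ.withDensity f t := by
  rw [withDensity_apply _ ht, ← setLIntegral_const]
  exact setLIntegral_mono' ht hf

variable {E : Type*} [NormedAddCommGroup E] [NormedSpace ℝ E] [MeasurableSpace E]

section Ball

variable [OpensMeasurableSpace E] (μ : Measure E) {ι : Type*} {s : Finset ι}
  (ℓ : ι → StrongDual ℝ E) {k : ι → ℝ}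

theorem exists_withDensity_ball_le (hk : ∀ i ∈ s, 0 ≤ k i) :
    ∃ A : ℝ, 0 < A ∧ ∀ (x : E) (r : ℝ),
      μ.withDensity (fun z => ENNReal.ofReal (∏ i ∈ s, |ℓ i z| ^ k i)) (ball x r) ≤
        ENNReal.ofReal (A * ∏ i ∈ s, (|ℓ i x| + r) ^ k i) * μ (ball x r) :=
  ⟨∏ i ∈ s, (1 + ‖ℓ i‖) ^ k i, by positivity, fun _ _ =>
    withDensity_apply_le_mul μ measurableSet_ball fun _ hz =>
      ENNReal.ofReal_le_ofReal (prod_abs_apply_rpow_le hk hz)⟩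

variable {ℓ}

theorem exists_le_withDensity_ball (hk : ∀ i ∈ s, 0 ≤ k i) (hℓ : ∀ i ∈ s, ℓ i ≠ 0) :
    ∃ δ : ℝ, 0 < δ ∧ ∃ B : ℝ, 0 < B ∧ ∀ (x : E) (r : ℝ), 0 < r → ∃ y,
      ENNReal.ofReal (B * ∏ i ∈ s, (|ℓ i x| + r) ^ k i) * μ (ball y (δ * r)) ≤
        μ.withDensity (fun z => ENNReal.ofReal (∏ i ∈ s, |ℓ i z| ^ k i)) (ball x r) := by
  obtain ⟨δ, hδ, H⟩ := exists_ball_subset_forall_le_abs_apply hℓ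
  have hK : 0 < ∏ i ∈ s, (1 + (‖ℓ i‖ + 1) / (‖ℓ i‖ * δ)) ^ k i := by positivity
  refine ⟨δ, hδ, _, inv_pos.2 hK, fun x r hr => ?_⟩
  obtain ⟨y, hyx, hyℓ⟩ := H x r hr
  refine ⟨y, (mul_le_withDensity_apply μ measurableSet_ball fun z hz => ?_).trans
    (measure_mono hyx)⟩
  refine ENNReal.ofReal_le_ofReal ((inv_mul_le_iff₀ hK).2 ?_)
  exact prod_abs_apply_add_rpow_le hk hℓ hδ (hyx hz) (hyℓ z hz)

end Ball

variable [FiniteDimensional ℝ E] [BorelSpace E] (μ : Measure E) [μ.IsAddHaarMeasure]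

theorem addHaar_ball_eq_ofReal (x : E) {r : ℝ} (hr : 0 < r) :
    μ (ball x r) = ENNReal.ofReal (r ^ Module.finrank ℝ E * μ.real (ball 0 1)) := by
  rw [Measure.addHaar_ball_of_pos μ x hr, ENNReal.ofReal_mul (by positivity),
    ofReal_measureReal measure_ball_lt_top.ne]

theorem dunklMeasure_ball_asymp_general {ι : Type*} {s : Finset ι} {ℓ : ι → StrongDual ℝ E}
    {k : ι → ℝ} (hk : ∀ i ∈ s, 0 ≤ k i) (hℓ : ∀ i ∈ s, ℓ i ≠ 0) :
    ∃ C : ℝ, 0 < C ∧ ∀ (x : E) (r : ℝ), 0 < r →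
      ENNReal.ofReal (C⁻¹ * r ^ Module.finrank ℝ E * ∏ i ∈ s, (|ℓ i x| + r) ^ k i) ≤
          μ.withDensity (fun z => ENNReal.ofReal (∏ i ∈ s, |ℓ i z| ^ k i)) (ball x r) ∧
        μ.withDensity (fun z => ENNReal.ofReal (∏ i ∈ s, |ℓ i z| ^ k i)) (ball x r) ≤
          ENNReal.ofReal (C * r ^ Module.finrank ℝ E * ∏ i ∈ s, (|ℓ i x| + r) ^ k i) := by
  obtain ⟨A, hA, hupper⟩ := exists_withDensity_ball_le μ ℓ hk
  obtain ⟨δ, hδ, B, hB, hlower⟩ := exists_le_withDensity_ball μ hk hℓ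
  set n := Module.finrank ℝ E
  set V := μ.real (ball (0 : E) 1)
  have hV : 0 < V := ENNReal.toReal_pos (measure_ball_pos μ _ one_pos).ne' measure_ball_lt_top.ne
  refine ⟨max (A * V) (B * δ ^ n * V)⁻¹, by positivity, fun x r hr => ⟨?_, ?_⟩⟩
  · obtain ⟨y, hy⟩ := hlower x r hr
    refine le_trans ?_ hy
    rw [addHaar_ball_eq_ofReal μ y (by positivity), ← ENNReal.ofReal_mul (by positivity)]
    apply ENNReal.ofReal_le_ofReal
    calc _ ≤ B * δ ^ n * V * r ^ n * ∏ i ∈ s, (|ℓ i x| + r) ^ k i := by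
          gcongr
          exact inv_le_of_inv_le₀ (by positivity) (le_max_right _ _)
      _ = B * (∏ i ∈ s, (|ℓ i x| + r) ^ k i) * ((δ * r) ^ n * V) := by ring
  · refine (hupper x r).trans ?_
    rw [addHaar_ball_eq_ofReal μ x hr, ← ENNReal.ofReal_mul (by positivity)]
    apply ENNReal.ofReal_le_ofReal
    calc _ = A * V * r ^ n * ∏ i ∈ s, (|ℓ i x| + r) ^ k i := by ring
      _ ≤ _ := by
        gcongr
        exact le_max_left _ _

end Measure

theorem dunklMeasure_ball_asymp
    (N : ℕ) (hN : 1 ≤ N)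
    (R : Finset (EuclideanSpace ℝ (Fin N)))
    (k : EuclideanSpace ℝ (Fin N) → ℝ)
    (hR0 : (0 : EuclideanSpace ℝ (Fin N)) ∉ R)
    (hRnorm : ∀ α ∈ R, ‖α‖ = Real.sqrt 2)
    (hRrefl : ∀ α ∈ R, ∀ β ∈ R, dunklReflect α β ∈ R)
    (hk0 : ∀ α ∈ R, 0 ≤ k α)
    (hkinv : ∀ α ∈ R, ∀ β ∈ R, k (dunklReflect α β) = k β) :
    ∃ C : ℝ, 0 < C ∧ ∀ (x : EuclideanSpace ℝ (Fin N)) (r : ℝ), 0 < r →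
      ENNReal.ofReal (C⁻¹ * r ^ N * ∏ α ∈ R, (|⟪x, α⟫| + r) ^ (k α)) ≤
          dunklMeasure N R k (ball x r) ∧
        dunklMeasure N R k (ball x r) ≤
          ENNReal.ofReal (C * r ^ N * ∏ α ∈ R, (|⟪x, α⟫| + r) ^ (k α)) := by
  have hne : ∀ α ∈ R, innerSL ℝ α ≠ 0 := fun α hα => by
    rw [← norm_ne_zero_iff, innerSL_apply_norm, norm_ne_zero_iff]
    exact ne_of_mem_of_not_mem hα hR0
  simpa only [dunklMeasure, finrank_euclideanSpace_fin, innerSL_apply_apply, real_inner_comm]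
    using dunklMeasure_ball_asymp_general volume hk0 hne
end
end

section
/- The measure w is doubling: there is a constant C > 0 such that w(B(x, 2r)) ≤ C · w(B(x, r)) for all x ∈ ℝ^N and r > 0. -/
/-!
The weight `∏ i, |ℓ i x| ^ k i` is comparable to a constant on any ball that keeps a distance
comparable to its radius from every hyperplane `ker (ℓ i)`. Hyperplanes are porous: every ball
contains a ball of an eighth of its radius that stays away from a given hyperplane. Applying this
to one hyperplane after another, every `ball x r` contains a ball of radius `8⁻¹ ^ m * r` that stays
away from all `m` hyperplanes. There the weight is, up to a constant factor, at least as large as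
anywhere in `ball x (2 * r)`, so the doubling property follows from the scaling of Haar measure.
-/

open MeasureTheory Metric
open scoped ENNReal RealInnerProductSpace BigOperators

noncomputable section

lemma prod_rpow_le_rpow_sum_mul_prod_rpow {ι : Type*} {s : Finset ι} {a b k : ι → ℝ} {D : ℝ}
    (hD : 0 < D) (ha : ∀ i ∈ s, 0 ≤ a i) (hk : ∀ i ∈ s, 0 ≤ k i)
    (hab : ∀ i ∈ s, a i ≤ D * b i) :
    ∏ i ∈ s, a i ^ k i ≤ D ^ (∑ i ∈ s, k i) * ∏ i ∈ s, b i ^ k i := by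
  rw [Real.rpow_sum_of_pos hD, ← Finset.prod_mul_distrib]
  refine Finset.prod_le_prod (fun i hi => Real.rpow_nonneg (ha i hi) _) fun i hi => ?_
  have hb : 0 ≤ b i := (mul_nonneg_iff_of_pos_left hD).1 ((ha i hi).trans (hab i hi))
  rw [← Real.mul_rpow hD.le hb]
  exact Real.rpow_le_rpow (ha i hi) (hab i hi) (hk i hi)

section Porosity

variable {ι E : Type*} [NormedAddCommGroup E] [NormedSpace ℝ E]

lemma exists_norm_le_one_and_half_opNorm_le_abs (ℓ : StrongDual ℝ E) :
    ∃ u : E, ‖u‖ ≤ 1 ∧ ‖ℓ‖ / 2 ≤ |ℓ u| := by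
  rcases (norm_nonneg ℓ).eq_or_lt with hℓ | hℓ
  · exact ⟨0, by simp, by simp [← hℓ]⟩
  · obtain ⟨u, hu, hℓu⟩ := ℓ.exists_lt_apply_of_lt_opNorm (half_lt_self hℓ)
    exact ⟨u, hu.le, hℓu.le⟩

lemma exists_norm_sub_le_and_abs_apply_le_abs (ℓ : StrongDual ℝ E) (x v : E) :
    ∃ z : E, ‖z - x‖ ≤ ‖v‖ ∧ |ℓ v| ≤ |ℓ z| := by
  by_cases h : |ℓ v| ≤ |ℓ (x + v)|
  · exact ⟨x + v, by simp, h⟩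
  · refine ⟨x - v, by simp, ?_⟩
    have htwo : 2 * |ℓ v| ≤ |ℓ (x + v)| + |ℓ (x - v)| := by
      calc 2 * |ℓ v| = |ℓ (x + v) - ℓ (x - v)| := by
            rw [← map_sub, add_sub_sub_cancel, ← two_smul ℝ v, map_smul, smul_eq_mul, abs_mul,
              abs_two]
        _ ≤ |ℓ (x + v)| + |ℓ (x - v)| := abs_sub _ _
    linarith

lemma abs_apply_le_abs_apply_add_opNorm_mul_dist (ℓ : StrongDual ℝ E) (x y : E) :
    |ℓ x| ≤ |ℓ y| + ‖ℓ‖ * dist x y := by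
  calc |ℓ x| = |ℓ y + ℓ (x - y)| := by rw [← map_add, add_sub_cancel]
    _ ≤ |ℓ y| + |ℓ (x - y)| := abs_add_le _ _
    _ ≤ |ℓ y| + ‖ℓ‖ * dist x y := by
      rw [dist_eq_norm]
      gcongr
      exact ℓ.le_opNorm (x - y)

lemma exists_ball_subset_mul_opNorm_le_abs (ℓ : StrongDual ℝ E) (x : E) {r : ℝ} (hr : 0 ≤ r) :
    ∃ z : E, ball z (r / 8) ⊆ ball x r ∧ ∀ y ∈ ball z (r / 8), r / 8 * ‖ℓ‖ ≤ |ℓ y| := by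
  obtain ⟨u, hu, hℓu⟩ := exists_norm_le_one_and_half_opNorm_le_abs ℓ
  obtain ⟨z, hzx, hℓz⟩ := exists_norm_sub_le_and_abs_apply_le_abs ℓ x ((r / 2) • u)
  rw [norm_smul, Real.norm_of_nonneg (by positivity)] at hzx
  rw [map_smul, smul_eq_mul, abs_mul, abs_of_nonneg (by positivity)] at hℓz
  refine ⟨z, ball_subset_ball' ?_, fun y hy => ?_⟩
  · have : r / 2 * ‖u‖ ≤ r / 2 * 1 := by gcongr
    rw [dist_eq_norm]
    linarith
  · have hcenter : r / 2 * (‖ℓ‖ / 2) ≤ |ℓ z| := le_trans (by gcongr) hℓz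
    have hvariation : ‖ℓ‖ * dist z y ≤ ‖ℓ‖ * (r / 8) := by
      gcongr
      exact (mem_ball'.1 hy).le
    linarith [abs_apply_le_abs_apply_add_opNorm_mul_dist ℓ z y]

lemma exists_ball_subset_forall_mem_mul_opNorm_le_abs (s : Finset ι) (ℓ : ι → StrongDual ℝ E)
    (x : E) {r : ℝ} (hr : 0 ≤ r) :
    ∃ z : E, ball z (8⁻¹ ^ s.card * r) ⊆ ball x r ∧
      ∀ i ∈ s, ∀ y ∈ ball z (8⁻¹ ^ s.card * r), 8⁻¹ ^ s.card * r * ‖ℓ i‖ ≤ |ℓ i y| := by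
  classical
  induction s using Finset.induction_on with
  | empty => exact ⟨x, by simp, by simp⟩
  | insert j s hj ih =>
    obtain ⟨z, hzx, hz⟩ := ih
    set ρ : ℝ := 8⁻¹ ^ s.card * r with hρ_def
    have hρ : 0 ≤ ρ := by positivity
    have hradius : 8⁻¹ ^ (insert j s).card * r = ρ / 8 := by
      rw [Finset.card_insert_of_notMem hj, pow_succ, hρ_def]
      ring
    obtain ⟨z', hz'z, hz'⟩ := exists_ball_subset_mul_opNorm_le_abs (ℓ j) z hρ
    rw [hradius]
    refine ⟨z', hz'z.trans hzx, fun i hi y hy => ?_⟩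
    rcases Finset.mem_insert.1 hi with rfl | hi
    · exact hz' y hy
    · calc ρ / 8 * ‖ℓ i‖ ≤ ρ * ‖ℓ i‖ := by
            gcongr
            linarith
        _ ≤ |ℓ i y| := hz i hi y (hz'z hy)

lemma exists_ball_subset_forall_prod_abs_rpow_le {s : Finset ι} (ℓ : ι → StrongDual ℝ E)
    {k : ι → ℝ} (hk : ∀ i ∈ s, 0 ≤ k i) (x : E) {r : ℝ} (hr : 0 < r) :
    ∃ z : E, ball z (8⁻¹ ^ s.card * r) ⊆ ball x r ∧
      ∀ y' ∈ ball x (2 * r), ∀ y ∈ ball z (8⁻¹ ^ s.card * r),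
        ∏ i ∈ s, |ℓ i y'| ^ k i ≤
          (1 + 3 * 8 ^ s.card) ^ (∑ i ∈ s, k i) * ∏ i ∈ s, |ℓ i y| ^ k i := by
  obtain ⟨z, hzx, hz⟩ := exists_ball_subset_forall_mem_mul_opNorm_le_abs s ℓ x hr.le
  refine ⟨z, hzx, fun y' hy' y hy => prod_rpow_le_rpow_sum_mul_prod_rpow (by positivity)
    (fun _ _ => abs_nonneg _) hk fun i hi => ?_⟩
  have hdist : dist y' y ≤ 3 * r := by
    linarith [dist_triangle_right y' y x, mem_ball.1 hy', mem_ball.1 (hzx hy)]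
  calc |ℓ i y'|
      ≤ |ℓ i y| + ‖ℓ i‖ * dist y' y := abs_apply_le_abs_apply_add_opNorm_mul_dist (ℓ i) y' y
    _ ≤ |ℓ i y| + ‖ℓ i‖ * (3 * r) := by gcongr
    _ = |ℓ i y| + 3 * 8 ^ s.card * (8⁻¹ ^ s.card * r * ‖ℓ i‖) := by
      rw [inv_pow]
      field_simp
    _ ≤ |ℓ i y| + 3 * 8 ^ s.card * |ℓ i y| := by
      gcongr
      exact hz i hi y hy
    _ = (1 + 3 * 8 ^ s.card) * |ℓ i y| := by ring

end Porosity

lemma withDensity_apply_le_mul_of_forall_le {X : Type*} [MeasurableSpace X] {μ : Measure X}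
    {f : X → ℝ≥0∞} {A B : Set X} (hA : MeasurableSet A) (hB : MeasurableSet B) {K M : ℝ≥0∞}
    (hK : K ≠ ∞) (hf : ∀ x ∈ A, ∀ y ∈ B, f x ≤ K * f y) (hμ : μ A ≤ M * μ B) :
    μ.withDensity f A ≤ M * K * μ.withDensity f B := by
  set S : ℝ≥0∞ := ⨆ x ∈ A, f x
  rw [withDensity_apply f hA, withDensity_apply f hB]
  calc ∫⁻ x in A, f x ∂μ
      ≤ S * μ A := setLIntegral_le_iSup_mul f hA
    _ ≤ S * (M * μ B) := by gcongr
    _ = M * ∫⁻ _ in B, S ∂μ := by rw [setLIntegral_const]; ring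
    _ ≤ M * ∫⁻ y in B, K * f y ∂μ := by
      gcongr M * ?_
      exact setLIntegral_mono' hB fun y hy => iSup₂_le fun x hx => hf x hx y hy
    _ = M * K * ∫⁻ y in B, f y ∂μ := by rw [lintegral_const_mul' K f hK, mul_assoc]

section Doubling

variable {ι E : Type*} [NormedAddCommGroup E] [NormedSpace ℝ E] [FiniteDimensional ℝ E]
  [MeasurableSpace E] [BorelSpace E]

lemma addHaar_ball_eq_ofReal_div_pow_mul_addHaar_ball (μ : Measure E) [μ.IsAddHaarMeasure]
    (x z : E) {R r : ℝ} (hR : 0 < R) (hr : 0 < r) :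
    μ (ball x R) = ENNReal.ofReal ((R / r) ^ Module.finrank ℝ E) * μ (ball z r) := by
  rw [Measure.addHaar_ball_center μ z, ← Measure.addHaar_ball_mul_of_pos μ x (by positivity),
    div_mul_cancel₀ R hr.ne']

theorem dunklMeasure_doubling_general (μ : Measure E) [μ.IsAddHaarMeasure] {s : Finset ι}
    (ℓ : ι → StrongDual ℝ E) {k : ι → ℝ} (hk : ∀ i ∈ s, 0 ≤ k i) :
    ∃ C : ℝ, 0 < C ∧ ∀ (x : E) (r : ℝ), 0 < r →
      μ.withDensity (fun y => ENNReal.ofReal (∏ i ∈ s, |ℓ i y| ^ k i)) (ball x (2 * r)) ≤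
        ENNReal.ofReal C *
          μ.withDensity (fun y => ENNReal.ofReal (∏ i ∈ s, |ℓ i y| ^ k i)) (ball x r) := by
  set K : ℝ := (1 + 3 * 8 ^ s.card) ^ (∑ i ∈ s, k i)
  set M : ℝ := (2 / 8⁻¹ ^ s.card) ^ Module.finrank ℝ E
  have hK : 0 < K := by positivity
  have hM : 0 < M := by positivity
  refine ⟨M * K, by positivity, fun x r hr => ?_⟩
  obtain ⟨z, hzx, hz⟩ := exists_ball_subset_forall_prod_abs_rpow_le ℓ hk x hr
  have hvolume : μ (ball x (2 * r)) = ENNReal.ofReal M * μ (ball z (8⁻¹ ^ s.card * r)) := by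
    rw [addHaar_ball_eq_ofReal_div_pow_mul_addHaar_ball μ x z (by positivity)
      (by positivity : 0 < 8⁻¹ ^ s.card * r), mul_div_mul_right _ _ hr.ne']
  rw [ENNReal.ofReal_mul hM.le]
  refine (withDensity_apply_le_mul_of_forall_le measurableSet_ball measurableSet_ball
    ENNReal.ofReal_ne_top (fun y' hy' y hy => ?_) hvolume.le).trans (by gcongr)
  rw [← ENNReal.ofReal_mul hK.le]
  exact ENNReal.ofReal_le_ofReal (hz y' hy' y hy)

end Doubling

theorem dunklMeasure_doubling
    (N : ℕ) (hN : 1 ≤ N)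
    (R : Finset (EuclideanSpace ℝ (Fin N)))
    (k : EuclideanSpace ℝ (Fin N) → ℝ)
    (hR0 : (0 : EuclideanSpace ℝ (Fin N)) ∉ R)
    (hRnorm : ∀ α ∈ R, ‖α‖ = Real.sqrt 2)
    (hRrefl : ∀ α ∈ R, ∀ β ∈ R, dunklReflect α β ∈ R)
    (hk0 : ∀ α ∈ R, 0 ≤ k α)
    (hkinv : ∀ α ∈ R, ∀ β ∈ R, k (dunklReflect α β) = k β) :
    ∃ C : ℝ, 0 < C ∧ ∀ (x : EuclideanSpace ℝ (Fin N)) (r : ℝ), 0 < r →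
      dunklMeasure N R k (ball x (2 * r)) ≤
        ENNReal.ofReal C * dunklMeasure N R k (ball x r) := by
  obtain ⟨C, hC, hdoubling⟩ := dunklMeasure_doubling_general
    (volume : Measure (EuclideanSpace ℝ (Fin N))) (innerSL ℝ) hk0
  refine ⟨C, hC, fun x r hr => ?_⟩
  simpa only [dunklMeasure, innerSL_apply_apply, real_inner_comm] using hdoubling x r hr
end
end

section
/- Let s > 0 and M > 0. Then J^{s}(x) > 0 for all x, and there is a constant C > 0 (depending on s and M) such that: J^{s}(x) ≤ C ‖x‖^{s−𝐍} whenever ‖x‖ ≤ 1/2 and 0 < s < 𝐍; J^{s}(x) ≤ C(−ln ‖x‖) whenever ‖x‖ ≤ 1/2 and s = 𝐍; J^{s}(x) ≤ C whenever ‖x‖ ≤ 1/2 and s > 𝐍; and J^{s}(x) ≤ C (1 + ‖x‖²)^{−M} whenever ‖x‖ > 1/2. -/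
open MeasureTheory Metric
open scoped ENNReal RealInnerProductSpace BigOperators

noncomputable section

/-- The normalizing constant `c_k = ∫ e^{-‖x‖²/2} dw(x)`. -/
def dunklConst (N : ℕ) (R : Finset (EuclideanSpace ℝ (Fin N)))
    (k : EuclideanSpace ℝ (Fin N) → ℝ) : ℝ :=
  ∫ x, Real.exp (-‖x‖ ^ 2 / 2) ∂(dunklMeasure N R k)

/-- The Dunkl heat kernel `h_t(x) = c_k⁻¹ (2t)^{-𝐍/2} e^{-‖x‖²/(4t)}`. -/
def dunklHeat (N : ℕ) (R : Finset (EuclideanSpace ℝ (Fin N)))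
    (k : EuclideanSpace ℝ (Fin N) → ℝ) (t : ℝ) (x : EuclideanSpace ℝ (Fin N)) : ℝ :=
  (dunklConst N R k)⁻¹ * (2 * t) ^ (-(homDim N R k) / 2) * Real.exp (-‖x‖ ^ 2 / (4 * t))

/-- The Bessel potential kernel `J^{s}(x) = Γ(s/2)⁻¹ ∫₀^∞ e^{-t} h_t(x) t^{s/2} dt/t`. -/
def dunklBessel (N : ℕ) (R : Finset (EuclideanSpace ℝ (Fin N)))
    (k : EuclideanSpace ℝ (Fin N) → ℝ) (s : ℝ) (x : EuclideanSpace ℝ (Fin N)) : ℝ :=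
  (Real.Gamma (s / 2))⁻¹ *
    ∫ t in Set.Ioi (0 : ℝ), Real.exp (-t) * dunklHeat N R k t x * t ^ (s / 2) / t

/-!
Since `e^{-t} h_t(x) t^{s/2-1}` is a multiple of `e^{-t-b/t} t^{a-1}` with `a = (s - 𝐍)/2` and
`b = ‖x‖²/4`, the kernel `J^{s}` is a positive multiple of the extended gamma function
`Γ_b(a) = ∫₀^∞ e^{-t-b/t} t^{a-1} dt`. The estimates are then one-dimensional:

* `Γ_b(a) ≤ Γ(a)` for `a > 0`;
* `Γ_b(a) = b^a Γ_b(-a)` by the substitution `t ↦ b/t`, so that `Γ_b(a) ≤ b^a Γ(-a)` for `a < 0`;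
* `a ↦ Γ_b(a)` is convex, so `Γ_b(0) ≤ (1 + b^{-ε})/2 · Γ(ε) ≤ (1 + b^{-ε})/(2ε)` for `0 < ε ≤ 1`,
  and `ε = 1/(-ln b)` makes `b^{-ε} = e` and gives the logarithmic bound;
* `e^{-b/t} ≤ (pt/b)^p` gives `Γ_b(a) = O(b^{-p})` for every `p`.
-/

lemma integral_pos_of_ae_pos {Ω : Type*} [MeasurableSpace Ω] {μ : Measure Ω} [NeZero μ]
    {f : Ω → ℝ} (hf : Integrable f μ) (hpos : ∀ᵐ ω ∂μ, 0 < f ω) : 0 < ∫ ω, f ω ∂μ := by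
  have hsupp : μ (Function.support f) = μ Set.univ :=
    measure_of_measure_compl_eq_zero (mem_ae_iff.mp (hpos.mono fun _ h => h.ne'))
  rw [integral_pos_iff_support_of_nonneg_ae (hpos.mono fun _ h => h.le) hf, hsupp]
  exact NeZero.pos _

/-! ### Extended gamma function -/

/-- The integrand `e^{-t} t^{a-1} e^{-b/t}` of the extended gamma function. -/
def extGammaIntegrand (a b t : ℝ) : ℝ :=
  Real.exp (-t) * t ^ (a - 1) * Real.exp (-b / t)

/-- The extended gamma function `Γ_b(a) = ∫₀^∞ e^{-t-b/t} t^{a-1} dt` of Chaudhry and Zubair, equal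
to `2 b^{a/2} K_a(2√b)` for `b > 0`. The integral diverges, and so has the junk value `0`, for
`b = 0` and `a ≤ 0`. -/
def extGamma (a b : ℝ) : ℝ :=
  ∫ t in Set.Ioi (0 : ℝ), extGammaIntegrand a b t

section ExtGamma

variable {a b p t : ℝ}

lemma extGammaIntegrand_pos (a b : ℝ) (ht : 0 < t) : 0 < extGammaIntegrand a b t := by
  unfold extGammaIntegrand; positivity

lemma measurable_extGammaIntegrand (a b : ℝ) : Measurable (extGammaIntegrand a b) := by
  unfold extGammaIntegrand; fun_prop

lemma extGammaIntegrand_anti_right {b' : ℝ} (h : b ≤ b') (ht : 0 < t) :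
    extGammaIntegrand a b' t ≤ extGammaIntegrand a b t := by
  unfold extGammaIntegrand; gcongr

lemma extGammaIntegrand_zero_right (a t : ℝ) :
    extGammaIntegrand a 0 t = Real.exp (-t) * t ^ (a - 1) := by
  simp [extGammaIntegrand]

lemma exp_neg_le_rpow_mul_rpow_neg {u : ℝ} (hu : 0 < u) (hp : 0 < p) :
    Real.exp (-u) ≤ p ^ p * u ^ (-p) := by
  have hexp : u / p ≤ Real.exp (u / p) := by linarith [Real.add_one_le_exp (u / p)]
  calc Real.exp (-u) = Real.exp (u / p) ^ (-p) := by
        rw [← Real.exp_mul]; congr 1; field_simp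
    _ ≤ (u / p) ^ (-p) := Real.rpow_le_rpow_of_nonpos (by positivity) hexp (by linarith)
    _ = p ^ p * u ^ (-p) := by
        rw [Real.div_rpow hu.le hp.le, Real.rpow_neg hp.le, div_inv_eq_mul, mul_comm]

lemma extGammaIntegrand_le (hb : 0 < b) (hp : 0 < p) (ht : 0 < t) :
    extGammaIntegrand a b t ≤
      p ^ p * b ^ (-p) * (Real.exp (-t) * t ^ (a + p - 1)) := by
  calc extGammaIntegrand a b t
      ≤ Real.exp (-t) * t ^ (a - 1) * (p ^ p * (b / t) ^ (-p)) := by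
        unfold extGammaIntegrand
        rw [neg_div]
        gcongr
        exact exp_neg_le_rpow_mul_rpow_neg (div_pos hb ht) hp
    _ = p ^ p * b ^ (-p) * (Real.exp (-t) * (t ^ (a - 1) * t ^ p)) := by
        rw [Real.div_rpow hb.le ht.le, Real.rpow_neg ht.le, div_inv_eq_mul]; ring
    _ = p ^ p * b ^ (-p) * (Real.exp (-t) * t ^ (a + p - 1)) := by
        rw [← Real.rpow_add ht, sub_add_eq_add_sub]

lemma integrableOn_extGammaIntegrand_of_le {g : ℝ → ℝ} (hg : IntegrableOn g (Set.Ioi 0))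
    (h : ∀ t, 0 < t → extGammaIntegrand a b t ≤ g t) :
    IntegrableOn (extGammaIntegrand a b) (Set.Ioi 0) := by
  refine Integrable.mono' hg (measurable_extGammaIntegrand a b).aestronglyMeasurable ?_
  filter_upwards [ae_restrict_mem measurableSet_Ioi] with t ht
  rw [Real.norm_of_nonneg (extGammaIntegrand_pos a b ht).le]
  exact h t ht

lemma integrableOn_extGammaIntegrand_of_pos_right (a : ℝ) (hb : 0 < b) :
    IntegrableOn (extGammaIntegrand a b) (Set.Ioi 0) := by
  have hap : 0 < a + (|a| + 1) := by linarith [neg_abs_le a]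
  exact integrableOn_extGammaIntegrand_of_le ((Real.GammaIntegral_convergent hap).const_mul _)
    fun t ht => extGammaIntegrand_le hb (by positivity) ht

lemma integrableOn_extGammaIntegrand_of_pos_left (ha : 0 < a) (hb : 0 ≤ b) :
    IntegrableOn (extGammaIntegrand a b) (Set.Ioi 0) :=
  integrableOn_extGammaIntegrand_of_le (Real.GammaIntegral_convergent ha) fun t ht =>
    (extGammaIntegrand_anti_right hb ht).trans_eq (extGammaIntegrand_zero_right a t)

lemma extGamma_pos (h : IntegrableOn (extGammaIntegrand a b) (Set.Ioi 0)) : 0 < extGamma a b := by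
  have : NeZero (volume.restrict (Set.Ioi (0 : ℝ))) := ⟨by simp⟩
  refine integral_pos_of_ae_pos h ?_
  filter_upwards [ae_restrict_mem measurableSet_Ioi] with t ht
  exact extGammaIntegrand_pos a b ht

lemma extGamma_le_setIntegral {g : ℝ → ℝ} (hg : IntegrableOn g (Set.Ioi 0))
    (h : ∀ t, 0 < t → extGammaIntegrand a b t ≤ g t) :
    extGamma a b ≤ ∫ t in Set.Ioi 0, g t := by
  refine integral_mono_of_nonneg ?_ hg ?_
  · filter_upwards [ae_restrict_mem measurableSet_Ioi] with t ht
    exact (extGammaIntegrand_pos a b ht).le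
  · filter_upwards [ae_restrict_mem measurableSet_Ioi] with t ht
    exact h t ht

lemma extGamma_anti_right {b' : ℝ} (hb : 0 < b) (h : b ≤ b') : extGamma a b' ≤ extGamma a b :=
  extGamma_le_setIntegral (integrableOn_extGammaIntegrand_of_pos_right a hb) fun _ ht =>
    extGammaIntegrand_anti_right h ht

lemma extGamma_le_Gamma (ha : 0 < a) (hb : 0 ≤ b) : extGamma a b ≤ Real.Gamma a := by
  rw [Real.Gamma_eq_integral ha]
  exact extGamma_le_setIntegral (Real.GammaIntegral_convergent ha) fun t ht =>
    (extGammaIntegrand_anti_right hb ht).trans_eq (extGammaIntegrand_zero_right a t)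

lemma extGamma_le_rpow_neg_mul_Gamma (hb : 0 < b) (hp : 0 < p) (hap : 0 < a + p) :
    extGamma a b ≤ p ^ p * b ^ (-p) * Real.Gamma (a + p) := by
  rw [Real.Gamma_eq_integral hap, ← integral_const_mul]
  exact extGamma_le_setIntegral ((Real.GammaIntegral_convergent hap).const_mul _) fun _ ht =>
    extGammaIntegrand_le hb hp ht

lemma exists_extGamma_le_rpow_neg (a M : ℝ) {b₀ : ℝ} (hb₀ : 0 < b₀) :
    ∃ C : ℝ, 0 < C ∧ ∀ b, b₀ ≤ b → extGamma a b ≤ C * b ^ (-M) := by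
  obtain ⟨p, hp, hap, hMp⟩ : ∃ p : ℝ, 0 < p ∧ 0 < a + p ∧ M ≤ p :=
    ⟨|a| + |M| + 1, by positivity, by linarith [neg_abs_le a, abs_nonneg M],
      by linarith [le_abs_self M, abs_nonneg a]⟩
  have : 0 < Real.Gamma (a + p) := Real.Gamma_pos_of_pos hap
  refine ⟨p ^ p * b₀ ^ (M - p) * Real.Gamma (a + p), by positivity, fun b hb => ?_⟩
  have hb_pos : 0 < b := hb₀.trans_le hb
  calc extGamma a b ≤ p ^ p * b ^ (-p) * Real.Gamma (a + p) :=
        extGamma_le_rpow_neg_mul_Gamma hb_pos hp hap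
    _ = p ^ p * b ^ (M - p) * Real.Gamma (a + p) * b ^ (-M) := by
        rw [show -p = M - p + -M by ring, Real.rpow_add hb_pos]; ring
    _ ≤ p ^ p * b₀ ^ (M - p) * Real.Gamma (a + p) * b ^ (-M) := by
        gcongr p ^ p * ?_ * Real.Gamma (a + p) * b ^ (-M)
        exact Real.rpow_le_rpow_of_nonpos hb₀ hb (by linarith)

lemma extGamma_eq_rpow_mul_extGamma_neg (a : ℝ) (hb : 0 < b) :
    extGamma a b = b ^ a * extGamma (-a) b := by
  have hscale : extGamma a b = b * ∫ u in Set.Ioi 0, extGammaIntegrand a b (b * u) := by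
    rw [integral_comp_mul_left_Ioi _ 0 hb, mul_zero, smul_eq_mul, mul_inv_cancel_left₀ hb.ne',
      extGamma]
  rw [hscale, ← integral_comp_rpow_Ioi _ (neg_ne_zero.mpr one_ne_zero), extGamma,
    ← integral_const_mul, ← integral_const_mul]
  refine setIntegral_congr_fun measurableSet_Ioi fun t (ht : 0 < t) => ?_
  have hinv : b * t ^ (-1 : ℝ) = b / t := by rw [Real.rpow_neg_one, div_eq_mul_inv]
  have hpow : t ^ (-1 - 1 : ℝ) = t ^ (-a - 1) * t ^ (a - 1) := by
    rw [← Real.rpow_add ht]; congr 1; ring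
  simp only [extGammaIntegrand, smul_eq_mul, abs_neg, abs_one, one_mul]
  rw [hinv, hpow, Real.div_rpow hb.le ht.le, Real.rpow_sub_one hb.ne',
    show -b / (b / t) = -t by field_simp, neg_div]
  field_simp

lemma extGamma_le_rpow_mul_Gamma_neg (ha : a < 0) (hb : 0 < b) :
    extGamma a b ≤ b ^ a * Real.Gamma (-a) := by
  rw [extGamma_eq_rpow_mul_extGamma_neg a hb]
  gcongr
  exact extGamma_le_Gamma (neg_pos.mpr ha) hb.le

lemma convexOn_extGamma_left (hb : 0 < b) : ConvexOn ℝ Set.univ fun a => extGamma a b := by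
  refine ⟨convex_univ, fun a₁ _ a₂ _ w₁ w₂ hw₁ hw₂ hw => ?_⟩
  have hint := integrableOn_extGammaIntegrand_of_pos_right (hb := hb)
  simp only [smul_eq_mul]
  calc extGamma (w₁ * a₁ + w₂ * a₂) b
      ≤ ∫ t in Set.Ioi 0, (w₁ * extGammaIntegrand a₁ b t + w₂ * extGammaIntegrand a₂ b t) := by
        refine extGamma_le_setIntegral (((hint a₁).const_mul w₁).add ((hint a₂).const_mul w₂))
          fun t ht => ?_
        have hconv := (convexOn_rpow_left ht).2 (Set.mem_univ (a₁ - 1)) (Set.mem_univ (a₂ - 1))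
          hw₁ hw₂ hw
        simp only [smul_eq_mul] at hconv
        have hexp : w₁ * a₁ + w₂ * a₂ - 1 = w₁ * (a₁ - 1) + w₂ * (a₂ - 1) := by
          linear_combination hw
        unfold extGammaIntegrand
        calc Real.exp (-t) * t ^ (w₁ * a₁ + w₂ * a₂ - 1) * Real.exp (-b / t)
            ≤ Real.exp (-t) * (w₁ * t ^ (a₁ - 1) + w₂ * t ^ (a₂ - 1)) * Real.exp (-b / t) := by
              rw [hexp]; gcongr
          _ = _ := by ring
    _ = w₁ * extGamma a₁ b + w₂ * extGamma a₂ b := by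
        rw [integral_add ((hint a₁).const_mul w₁) ((hint a₂).const_mul w₂), integral_const_mul,
          integral_const_mul, extGamma, extGamma]

lemma Gamma_le_one_div {ε : ℝ} (hε : 0 < ε) (hε1 : ε ≤ 1) : Real.Gamma ε ≤ 1 / ε := by
  have hmax : Real.Gamma (ε + 1) ≤ max (Real.Gamma 1) (Real.Gamma 2) :=
    Real.convexOn_Gamma.le_max_of_mem_Icc (Set.mem_Ioi.mpr one_pos) (Set.mem_Ioi.mpr two_pos)
      ⟨by linarith, by linarith⟩
  rw [Real.Gamma_one, Real.Gamma_two, max_self, Real.Gamma_add_one hε.ne'] at hmax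
  rwa [le_div_iff₀' hε]

lemma extGamma_zero_left_le_of_pos {ε : ℝ} (hb : 0 < b) (hε : 0 < ε) :
    extGamma 0 b ≤ (1 + b ^ (-ε)) / 2 * Real.Gamma ε := by
  have hconv := (convexOn_extGamma_left hb).2 (Set.mem_univ ε) (Set.mem_univ (-ε))
    (by norm_num : (0 : ℝ) ≤ 1 / 2) (by norm_num : (0 : ℝ) ≤ 1 / 2) (by norm_num)
  calc extGamma 0 b ≤ 1 / 2 * extGamma ε b + 1 / 2 * extGamma (-ε) b := by simpa using hconv
    _ ≤ 1 / 2 * Real.Gamma ε + 1 / 2 * (b ^ (-ε) * Real.Gamma ε) := by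
        gcongr
        · exact extGamma_le_Gamma hε hb.le
        · simpa using extGamma_le_rpow_mul_Gamma_neg (neg_lt_zero.mpr hε) hb
    _ = (1 + b ^ (-ε)) / 2 * Real.Gamma ε := by ring

lemma extGamma_zero_left_le_neg_log (hb : 0 < b) (hb1 : b ≤ Real.exp (-1)) :
    extGamma 0 b ≤ (1 + Real.exp 1) / 2 * (-Real.log b) := by
  have hlog : 1 ≤ -Real.log b := by
    linarith [(Real.log_le_iff_le_exp hb).mpr hb1]
  have hlog_pos : 0 < -Real.log b := by linarith
  have hlog_ne : Real.log b ≠ 0 := (neg_pos.mp hlog_pos).ne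
  have hε : 0 < 1 / -Real.log b := by positivity
  have hrpow : b ^ (-(1 / -Real.log b)) = Real.exp 1 := by
    rw [Real.rpow_def_of_pos hb]
    congr 1
    field_simp
  calc extGamma 0 b ≤ (1 + b ^ (-(1 / -Real.log b))) / 2 * Real.Gamma (1 / -Real.log b) :=
        extGamma_zero_left_le_of_pos hb hε
    _ ≤ (1 + Real.exp 1) / 2 * (1 / (1 / -Real.log b)) := by
        rw [hrpow]
        gcongr
        exact Gamma_le_one_div hε ((div_le_one hlog_pos).mpr hlog)
    _ = (1 + Real.exp 1) / 2 * (-Real.log b) := by rw [one_div_one_div]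

lemma not_integrableOn_extGammaIntegrand_zero_right (ha : a ≤ 0) :
    ¬ IntegrableOn (extGammaIntegrand a 0) (Set.Ioi 0) := by
  intro h
  have hrpow : IntegrableOn (fun t : ℝ => t ^ (a - 1)) (Set.Ioo 0 1) := by
    refine Integrable.mono' ((h.mono_set Set.Ioo_subset_Ioi_self).const_mul (Real.exp 1))
      (by fun_prop) ?_
    filter_upwards [ae_restrict_mem measurableSet_Ioo] with t ht
    have hpos : 0 < t ^ (a - 1) := Real.rpow_pos_of_pos ht.1 _
    rw [Real.norm_of_nonneg hpos.le, extGammaIntegrand_zero_right, ← mul_assoc, ← Real.exp_add]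
    exact le_mul_of_one_le_left hpos.le (Real.one_le_exp (by linarith [ht.2]))
  rw [intervalIntegral.integrableOn_Ioo_rpow_iff one_pos] at hrpow
  linarith

lemma extGamma_zero_right_of_nonpos (ha : a ≤ 0) : extGamma a 0 = 0 :=
  integral_undef (not_integrableOn_extGammaIntegrand_zero_right ha)

end ExtGamma

/-! ### Dunkl weight -/

section Weight

variable {E : Type*} [NormedAddCommGroup E] [InnerProductSpace ℝ E] {R : Finset E} {k : E → ℝ}

/-- The Dunkl weight `∏_{α ∈ R} |⟨x,α⟩|^{k α}`, the density of `dunklMeasure`, for an arbitrary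
finite set `R` of vectors. -/
def dunklWeight (R : Finset E) (k : E → ℝ) (x : E) : ℝ :=
  ∏ α ∈ R, |⟪x, α⟫| ^ k α

lemma dunklWeight_nonneg (R : Finset E) (k : E → ℝ) (x : E) : 0 ≤ dunklWeight R k x :=
  Finset.prod_nonneg fun _ _ => Real.rpow_nonneg (abs_nonneg _) _

lemma continuous_dunklWeight (hk : ∀ α ∈ R, 0 ≤ k α) : Continuous (dunklWeight R k) :=
  continuous_finsetProd _ fun α hα =>
    Continuous.rpow_const (by fun_prop) fun _ => Or.inr (hk α hα)

lemma dunklWeight_le_exp (hk : ∀ α ∈ R, 0 ≤ k α) (x : E) :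
    dunklWeight R k x ≤ Real.exp ((∑ α ∈ R, k α * ‖α‖) * ‖x‖) := by
  rw [Finset.sum_mul, Real.exp_sum]
  refine Finset.prod_le_prod (fun _ _ => Real.rpow_nonneg (abs_nonneg _) _) fun α hα => ?_
  have hinner : |⟪x, α⟫| ≤ Real.exp (‖x‖ * ‖α‖) :=
    (abs_real_inner_le_norm x α).trans (by linarith [Real.add_one_le_exp (‖x‖ * ‖α‖)])
  calc |⟪x, α⟫| ^ k α ≤ Real.exp (‖x‖ * ‖α‖) ^ k α :=
        Real.rpow_le_rpow (abs_nonneg _) hinner (hk α hα)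
    _ = Real.exp (k α * ‖α‖ * ‖x‖) := by rw [← Real.exp_mul]; congr 1; ring

variable [FiniteDimensional ℝ E] [MeasurableSpace E] [BorelSpace E]

lemma integrable_exp_neg_mul_norm_sq {c : ℝ} (hc : 0 < c) :
    Integrable fun x : E => Real.exp (-c * ‖x‖ ^ 2) := by
  refine Integrable.of_integral_ne_zero ?_
  rw [GaussianFourier.integral_rexp_neg_mul_sq_norm hc]
  positivity

lemma integrable_dunklWeight_mul_exp (hk : ∀ α ∈ R, 0 ≤ k α) {c : ℝ} (hc : 0 < c) :
    Integrable fun x => dunklWeight R k x * Real.exp (-c * ‖x‖ ^ 2) := by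
  set A : ℝ := ∑ α ∈ R, k α * ‖α‖
  refine Integrable.mono' ((integrable_exp_neg_mul_norm_sq (half_pos hc)).const_mul
    (Real.exp (A ^ 2 / (2 * c)))) ?_ (.of_forall fun x => ?_)
  · exact ((continuous_dunklWeight hk).mul (by fun_prop)).aestronglyMeasurable
  have hsquare : A * ‖x‖ + -c * ‖x‖ ^ 2 ≤ A ^ 2 / (2 * c) + -(c / 2) * ‖x‖ ^ 2 := by
    have hid : A ^ 2 / (2 * c) + -(c / 2) * ‖x‖ ^ 2 - (A * ‖x‖ + -c * ‖x‖ ^ 2) =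
        (A - c * ‖x‖) ^ 2 / (2 * c) := by field_simp; ring
    rw [← sub_nonneg, hid]
    positivity
  rw [Real.norm_of_nonneg (mul_nonneg (dunklWeight_nonneg R k x) (Real.exp_pos _).le)]
  calc dunklWeight R k x * Real.exp (-c * ‖x‖ ^ 2)
      ≤ Real.exp (A * ‖x‖) * Real.exp (-c * ‖x‖ ^ 2) := by
        gcongr
        exact dunklWeight_le_exp hk x
    _ ≤ Real.exp (A ^ 2 / (2 * c)) * Real.exp (-(c / 2) * ‖x‖ ^ 2) := by
        rw [← Real.exp_add, ← Real.exp_add]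
        exact Real.exp_le_exp.mpr hsquare

lemma ae_inner_ne_zero (μ : Measure E) [μ.IsAddHaarMeasure] {α : E} (hα : α ≠ 0) :
    ∀ᵐ x ∂μ, ⟪x, α⟫ ≠ 0 := by
  have hproper : (ℝ ∙ α)ᗮ ≠ ⊤ := by
    simpa [Submodule.orthogonal_eq_top_iff] using hα
  refine measure_mono_null (fun x hx => ?_) (Measure.addHaar_submodule μ (ℝ ∙ α)ᗮ hproper)
  exact Submodule.mem_orthogonal_singleton_iff_inner_left.mpr (not_not.mp hx)

lemma ae_dunklWeight_pos (μ : Measure E) [μ.IsAddHaarMeasure] (hR0 : (0 : E) ∉ R) (k : E → ℝ) :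
    ∀ᵐ x ∂μ, 0 < dunklWeight R k x := by
  have hne : ∀ᵐ x ∂μ, ∀ α ∈ R, ⟪x, α⟫ ≠ 0 :=
    (Filter.eventually_all_finset R).mpr fun α hα =>
      ae_inner_ne_zero μ (ne_of_mem_of_not_mem hα hR0)
  filter_upwards [hne] with x hx
  exact Finset.prod_pos fun α hα => Real.rpow_pos_of_pos (abs_pos.mpr (hx α hα)) _

end Weight

/-! ### Bessel kernel -/

section Bessel

variable {N : ℕ} {R : Finset (EuclideanSpace ℝ (Fin N))} {k : EuclideanSpace ℝ (Fin N) → ℝ}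
  {s : ℝ}

lemma dunklConst_eq_integral (hk0 : ∀ α ∈ R, 0 ≤ k α) :
    dunklConst N R k = ∫ x, dunklWeight R k x * Real.exp (-(1 / 2) * ‖x‖ ^ 2) := by
  have hmeas : Measurable fun x => ENNReal.ofReal (dunklWeight R k x) :=
    (continuous_dunklWeight hk0).measurable.ennreal_ofReal
  calc dunklConst N R k
      = ∫ x, Real.exp (-‖x‖ ^ 2 / 2)
          ∂volume.withDensity fun x => ENNReal.ofReal (dunklWeight R k x) := rfl
    _ = ∫ x, (ENNReal.ofReal (dunklWeight R k x)).toReal • Real.exp (-‖x‖ ^ 2 / 2) :=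
        integral_withDensity_eq_integral_toReal_smul hmeas
          (.of_forall fun _ => ENNReal.ofReal_lt_top) _
    _ = ∫ x, dunklWeight R k x * Real.exp (-(1 / 2) * ‖x‖ ^ 2) := by
        congr 1 with x
        rw [ENNReal.toReal_ofReal (dunklWeight_nonneg R k x), smul_eq_mul,
          show -‖x‖ ^ 2 / 2 = -(1 / 2) * ‖x‖ ^ 2 by ring]

lemma dunklConst_pos (hR0 : (0 : EuclideanSpace ℝ (Fin N)) ∉ R) (hk0 : ∀ α ∈ R, 0 ≤ k α) :
    0 < dunklConst N R k := by
  rw [dunklConst_eq_integral hk0]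
  exact integral_pos_of_ae_pos (integrable_dunklWeight_mul_exp hk0 one_half_pos)
    ((ae_dunklWeight_pos volume hR0 k).mono fun _ hx => mul_pos hx (Real.exp_pos _))

/-- The factor `Γ(s/2)⁻¹ c_k⁻¹ 2^{-𝐍/2}` relating `dunklBessel` to `extGamma`. -/
def dunklBesselCoeff (N : ℕ) (R : Finset (EuclideanSpace ℝ (Fin N)))
    (k : EuclideanSpace ℝ (Fin N) → ℝ) (s : ℝ) : ℝ :=
  (Real.Gamma (s / 2))⁻¹ * ((dunklConst N R k)⁻¹ * 2 ^ (-(homDim N R k) / 2))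

lemma dunklBesselCoeff_pos (hR0 : (0 : EuclideanSpace ℝ (Fin N)) ∉ R)
    (hk0 : ∀ α ∈ R, 0 ≤ k α) (hs : 0 < s) : 0 < dunklBesselCoeff N R k s := by
  have hconst : 0 < dunklConst N R k := dunklConst_pos hR0 hk0
  have : 0 < Real.Gamma (s / 2) := Real.Gamma_pos_of_pos (half_pos hs)
  unfold dunklBesselCoeff
  positivity

lemma dunklBessel_eq_coeff_mul_extGamma (s : ℝ) (x : EuclideanSpace ℝ (Fin N)) :
    dunklBessel N R k s x =
      dunklBesselCoeff N R k s * extGamma ((s - homDim N R k) / 2) (‖x‖ ^ 2 / 4) := by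
  rw [dunklBessel, dunklBesselCoeff, mul_assoc, extGamma]
  congr 1
  rw [← integral_const_mul]
  refine setIntegral_congr_fun measurableSet_Ioi fun t (ht : 0 < t) => ?_
  simp only [dunklHeat, extGammaIntegrand]
  rw [Real.mul_rpow two_pos.le ht.le,
    show (s - homDim N R k) / 2 - 1 = -(homDim N R k) / 2 + s / 2 - 1 by ring,
    Real.rpow_sub_one ht.ne', Real.rpow_add ht,
    show -(‖x‖ ^ 2 / 4) / t = -‖x‖ ^ 2 / (4 * t) by field_simp]
  ring

-- The kernel is `+∞` at the origin here; `0` is the junk value of the divergent integral.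
lemma dunklBessel_zero_of_le_homDim (h : s ≤ homDim N R k) : dunklBessel N R k s 0 = 0 := by
  have hexponent : (s - homDim N R k) / 2 ≤ 0 := by linarith
  simp [dunklBessel_eq_coeff_mul_extGamma, extGamma_zero_right_of_nonpos hexponent]

lemma dunklBessel_pos (hR0 : (0 : EuclideanSpace ℝ (Fin N)) ∉ R) (hk0 : ∀ α ∈ R, 0 ≤ k α)
    (hs : 0 < s) {x : EuclideanSpace ℝ (Fin N)} (hx : x ≠ 0) : 0 < dunklBessel N R k s x := by
  rw [dunklBessel_eq_coeff_mul_extGamma]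
  exact mul_pos (dunklBesselCoeff_pos hR0 hk0 hs)
    (extGamma_pos (integrableOn_extGammaIntegrand_of_pos_right _ (by positivity)))

lemma dunklBessel_pos_of_homDim_lt (hR0 : (0 : EuclideanSpace ℝ (Fin N)) ∉ R)
    (hk0 : ∀ α ∈ R, 0 ≤ k α) (hs : 0 < s) (h : homDim N R k < s)
    (x : EuclideanSpace ℝ (Fin N)) : 0 < dunklBessel N R k s x := by
  rw [dunklBessel_eq_coeff_mul_extGamma]
  exact mul_pos (dunklBesselCoeff_pos hR0 hk0 hs)
    (extGamma_pos (integrableOn_extGammaIntegrand_of_pos_left (by linarith) (by positivity)))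

lemma exists_dunklBessel_le_norm_rpow (hR0 : (0 : EuclideanSpace ℝ (Fin N)) ∉ R)
    (hk0 : ∀ α ∈ R, 0 ≤ k α) (hs : 0 < s) (h : s < homDim N R k) :
    ∃ C : ℝ, 0 < C ∧ ∀ x, dunklBessel N R k s x ≤ C * ‖x‖ ^ (s - homDim N R k) := by
  have hK := dunklBesselCoeff_pos hR0 hk0 hs
  set a := (s - homDim N R k) / 2 with ha
  have ha_neg : a < 0 := by linarith
  have : 0 < Real.Gamma (-a) := Real.Gamma_pos_of_pos (neg_pos.mpr ha_neg)
  refine ⟨dunklBesselCoeff N R k s * (Real.Gamma (-a) / 4 ^ a), by positivity, fun x => ?_⟩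
  rcases eq_or_ne x 0 with rfl | hx
  · rw [dunklBessel_zero_of_le_homDim h.le]
    positivity
  have hrpow : (‖x‖ ^ 2 / 4) ^ a = ‖x‖ ^ (s - homDim N R k) / 4 ^ a := by
    rw [Real.div_rpow (by positivity) (by norm_num), ← Real.rpow_two,
      ← Real.rpow_mul (norm_nonneg x), ha, mul_div_cancel₀ _ two_ne_zero]
  calc dunklBessel N R k s x = dunklBesselCoeff N R k s * extGamma a (‖x‖ ^ 2 / 4) :=
        dunklBessel_eq_coeff_mul_extGamma s x
    _ ≤ dunklBesselCoeff N R k s * ((‖x‖ ^ 2 / 4) ^ a * Real.Gamma (-a)) := by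
        gcongr
        exact extGamma_le_rpow_mul_Gamma_neg ha_neg (by positivity)
    _ = dunklBesselCoeff N R k s * (Real.Gamma (-a) / 4 ^ a) * ‖x‖ ^ (s - homDim N R k) := by
        rw [hrpow]; ring

lemma neg_log_sq_div_four_le {r : ℝ} (hr : 0 < r) (hr2 : r ≤ 1 / 2) :
    -Real.log (r ^ 2 / 4) ≤ 4 * -Real.log r := by
  have hlog : Real.log r ≤ -Real.log 2 := by
    simpa [one_div, Real.log_inv] using Real.log_le_log hr hr2
  rw [show r ^ 2 / 4 = (r / 2) ^ 2 by ring, Real.log_pow, Real.log_div hr.ne' two_ne_zero]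
  push_cast
  linarith

lemma exists_dunklBessel_le_neg_log_norm (hR0 : (0 : EuclideanSpace ℝ (Fin N)) ∉ R)
    (hk0 : ∀ α ∈ R, 0 ≤ k α) (hs : 0 < s) (h : s = homDim N R k) :
    ∃ C : ℝ, 0 < C ∧ ∀ x, ‖x‖ ≤ 1 / 2 → dunklBessel N R k s x ≤ C * -Real.log ‖x‖ := by
  have hK := dunklBesselCoeff_pos hR0 hk0 hs
  refine ⟨dunklBesselCoeff N R k s * ((1 + Real.exp 1) / 2 * 4), by positivity, fun x hx => ?_⟩
  rcases eq_or_ne x 0 with rfl | hx0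
  · simp [dunklBessel_zero_of_le_homDim h.le]
  have hnorm : 0 < ‖x‖ := norm_pos_iff.mpr hx0
  have hsmall : ‖x‖ ^ 2 / 4 ≤ Real.exp (-1) := by
    have hexp : (1 / 3 : ℝ) ≤ Real.exp (-1) := by
      rw [Real.exp_neg, ← one_div]
      exact one_div_le_one_div_of_le (Real.exp_pos 1) Real.exp_one_lt_three.le
    nlinarith
  calc dunklBessel N R k s x = dunklBesselCoeff N R k s * extGamma 0 (‖x‖ ^ 2 / 4) := by
        rw [dunklBessel_eq_coeff_mul_extGamma, ← h, sub_self, zero_div]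
    _ ≤ dunklBesselCoeff N R k s * ((1 + Real.exp 1) / 2 * (4 * -Real.log ‖x‖)) := by
        gcongr
        exact (extGamma_zero_left_le_neg_log (by positivity) hsmall).trans
          (by gcongr; exact neg_log_sq_div_four_le hnorm hx)
    _ = dunklBesselCoeff N R k s * ((1 + Real.exp 1) / 2 * 4) * -Real.log ‖x‖ := by ring

lemma exists_dunklBessel_le_const (hR0 : (0 : EuclideanSpace ℝ (Fin N)) ∉ R)
    (hk0 : ∀ α ∈ R, 0 ≤ k α) (hs : 0 < s) (h : homDim N R k < s) :
    ∃ C : ℝ, 0 < C ∧ ∀ x, dunklBessel N R k s x ≤ C := by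
  have hK := dunklBesselCoeff_pos hR0 hk0 hs
  have ha : 0 < (s - homDim N R k) / 2 := by linarith
  refine ⟨_, mul_pos hK (Real.Gamma_pos_of_pos ha), fun x => ?_⟩
  rw [dunklBessel_eq_coeff_mul_extGamma]
  gcongr
  exact extGamma_le_Gamma ha (by positivity)

lemma exists_dunklBessel_le_one_add_norm_sq_rpow (hR0 : (0 : EuclideanSpace ℝ (Fin N)) ∉ R)
    (hk0 : ∀ α ∈ R, 0 ≤ k α) (hs : 0 < s) (M : ℝ) :
    ∃ C : ℝ, 0 < C ∧ ∀ x, 1 / 2 < ‖x‖ →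
      dunklBessel N R k s x ≤ C * (1 + ‖x‖ ^ 2) ^ (-M) := by
  have hK := dunklBesselCoeff_pos hR0 hk0 hs
  obtain ⟨C, hC, hdecay⟩ := exists_extGamma_le_rpow_neg ((s - homDim N R k) / 2) M
    (by norm_num : (0 : ℝ) < 1 / 20)
  refine ⟨dunklBesselCoeff N R k s * (C / 20 ^ (-M)), by positivity, fun x hx => ?_⟩
  have hcompare : (1 + ‖x‖ ^ 2) / 20 ≤ ‖x‖ ^ 2 / 4 := by nlinarith
  calc dunklBessel N R k s x
      = dunklBesselCoeff N R k s * extGamma ((s - homDim N R k) / 2) (‖x‖ ^ 2 / 4) :=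
        dunklBessel_eq_coeff_mul_extGamma s x
    _ ≤ dunklBesselCoeff N R k s * (C * ((1 + ‖x‖ ^ 2) / 20) ^ (-M)) := by
        gcongr
        exact (extGamma_anti_right (by positivity) hcompare).trans
          (hdecay _ (by linarith [sq_nonneg ‖x‖]))
    _ = dunklBesselCoeff N R k s * (C / 20 ^ (-M)) * (1 + ‖x‖ ^ 2) ^ (-M) := by
        rw [Real.div_rpow (by positivity) (by norm_num)]; ring

lemma exists_dunklBessel_le_near_zero (hR0 : (0 : EuclideanSpace ℝ (Fin N)) ∉ R)
    (hk0 : ∀ α ∈ R, 0 ≤ k α) (hs : 0 < s) :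
    ∃ C : ℝ, 0 < C ∧ ∀ x,
      (s < homDim N R k → dunklBessel N R k s x ≤ C * ‖x‖ ^ (s - homDim N R k)) ∧
      (‖x‖ ≤ 1 / 2 → s = homDim N R k → dunklBessel N R k s x ≤ C * -Real.log ‖x‖) ∧
      (homDim N R k < s → dunklBessel N R k s x ≤ C) := by
  rcases lt_trichotomy s (homDim N R k) with hlt | heq | hgt
  · obtain ⟨C, hC, hle⟩ := exists_dunklBessel_le_norm_rpow hR0 hk0 hs hlt
    exact ⟨C, hC, fun x => ⟨fun _ => hle x, fun _ h => absurd h hlt.ne,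
      fun h => absurd h hlt.not_gt⟩⟩
  · obtain ⟨C, hC, hle⟩ := exists_dunklBessel_le_neg_log_norm hR0 hk0 hs heq
    exact ⟨C, hC, fun x => ⟨fun h => absurd heq h.ne, fun hx _ => hle x hx,
      fun h => absurd heq h.ne'⟩⟩
  · obtain ⟨C, hC, hle⟩ := exists_dunklBessel_le_const hR0 hk0 hs hgt
    exact ⟨C, hC, fun x => ⟨fun h => absurd h hgt.not_gt, fun _ h => absurd h hgt.ne',
      fun _ => hle x⟩⟩

theorem dunklBessel_estimates_general (hR0 : (0 : EuclideanSpace ℝ (Fin N)) ∉ R)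
    (hk0 : ∀ α ∈ R, 0 ≤ k α) (hs : 0 < s) (M : ℝ) :
    (∀ x : EuclideanSpace ℝ (Fin N), x ≠ 0 → 0 < dunklBessel N R k s x) ∧
    (homDim N R k < s → ∀ x : EuclideanSpace ℝ (Fin N), 0 < dunklBessel N R k s x) ∧
    ∃ C : ℝ, 0 < C ∧ ∀ x : EuclideanSpace ℝ (Fin N),
      (s < homDim N R k → dunklBessel N R k s x ≤ C * ‖x‖ ^ (s - homDim N R k)) ∧
      (‖x‖ ≤ 1 / 2 → s = homDim N R k → dunklBessel N R k s x ≤ C * -Real.log ‖x‖) ∧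
      (homDim N R k < s → dunklBessel N R k s x ≤ C) ∧
      (1 / 2 < ‖x‖ → dunklBessel N R k s x ≤ C * (1 + ‖x‖ ^ 2) ^ (-M)) := by
  refine ⟨fun x => dunklBessel_pos hR0 hk0 hs, dunklBessel_pos_of_homDim_lt hR0 hk0 hs, ?_⟩
  obtain ⟨C₀, hC₀, hnear⟩ := exists_dunklBessel_le_near_zero hR0 hk0 hs
  obtain ⟨C₁, -, hfar⟩ := exists_dunklBessel_le_one_add_norm_sq_rpow hR0 hk0 hs M
  have h₀ : C₀ ≤ max C₀ C₁ := le_max_left ..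
  refine ⟨max C₀ C₁, hC₀.trans_le h₀, fun x => ⟨fun h => ?_, fun hx h => ?_, fun h => ?_,
    fun hx => ?_⟩⟩
  · exact ((hnear x).1 h).trans (by gcongr)
  · have hlog : 0 ≤ -Real.log ‖x‖ :=
      neg_nonneg.mpr (Real.log_nonpos (norm_nonneg x) (by linarith))
    exact ((hnear x).2.1 hx h).trans (by gcongr)
  · exact ((hnear x).2.2 h).trans h₀
  · exact (hfar x hx).trans (by gcongr; exact le_max_right ..)

end Bessel

theorem dunklBessel_estimates
    (N : ℕ) (hN : 1 ≤ N)
    (R : Finset (EuclideanSpace ℝ (Fin N)))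
    (k : EuclideanSpace ℝ (Fin N) → ℝ)
    (hR0 : (0 : EuclideanSpace ℝ (Fin N)) ∉ R)
    (hRnorm : ∀ α ∈ R, ‖α‖ = Real.sqrt 2)
    (hRrefl : ∀ α ∈ R, ∀ β ∈ R, dunklReflect α β ∈ R)
    (hk0 : ∀ α ∈ R, 0 ≤ k α)
    (hkinv : ∀ α ∈ R, ∀ β ∈ R, k (dunklReflect α β) = k β)
    (s M : ℝ) (hs : 0 < s) (hM : 0 < M) :
    (∀ x : EuclideanSpace ℝ (Fin N), x ≠ 0 → 0 < dunklBessel N R k s x) ∧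
    (homDim N R k < s → ∀ x : EuclideanSpace ℝ (Fin N), 0 < dunklBessel N R k s x) ∧
    ∃ C : ℝ, 0 < C ∧ ∀ x : EuclideanSpace ℝ (Fin N),
      (‖x‖ ≤ 1 / 2 → s < homDim N R k →
        dunklBessel N R k s x ≤ C * ‖x‖ ^ (s - homDim N R k)) ∧
      (‖x‖ ≤ 1 / 2 → s = homDim N R k →
        dunklBessel N R k s x ≤ C * (-Real.log ‖x‖)) ∧
      (‖x‖ ≤ 1 / 2 → homDim N R k < s →
        dunklBessel N R k s x ≤ C) ∧
      (1 / 2 < ‖x‖ →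
        dunklBessel N R k s x ≤ C * (1 + ‖x‖ ^ 2) ^ (-M)) := by
  obtain ⟨hpos, hpos', C, hC, hle⟩ := dunklBessel_estimates_general hR0 hk0 hs M
  exact ⟨hpos, hpos', C, hC, fun x =>
    ⟨fun _ => (hle x).1, (hle x).2.1, fun _ => (hle x).2.2.1, (hle x).2.2.2⟩⟩
end
end
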